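/- arXiv:2109.09877 — 3 statements merged into one kernel-verified Lean document; each statement's English description precedes it below -/
import Mathlib

section
/- Let p > 3 be a prime. Define F(n,k) and G(n,k) as follows: F(n,k) = (6n-2k+1)/2^{8n-2k} · C(2n,n)·C(2n+2k,n+k)·C(2n-2k,n-k)·C(n+k,n) / C(2k,k) for n ≥ k and F(n,k) = 0 for n < k; G(n,k) = n^2·C(2n,n)·C(2n+2k,n+k)·C(2n-2k,n-k)·C(n+k,n) / (2^{8n-2k-4}·(2n+2k-1)·C(2k,k)) for n ≥ k with (n,k) ≠ (0,0), and G(n,k) = 0 for n < k. Then ∑_{n=0}^{(p-1)/2} F(n,0) = F((p-1)/2, (p-1)/2) + ∑_{k=1}^{(p-1)/2} G((p+1)/2, k). -/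
/-- The WZ-pair function `F(n,k)`; it vanishes for `n < k`. -/
def F (n k : ℕ) : ℚ :=
  if k ≤ n then
    (6 * (n : ℚ) - 2 * k + 1) / 2 ^ (8 * n - 2 * k) *
      (((2 * n).choose n : ℚ) * ((2 * n + 2 * k).choose (n + k)) *
        ((2 * n - 2 * k).choose (n - k)) * ((n + k).choose n)) /
      ((2 * k).choose k)
  else 0

/-- The WZ-pair function `G(n,k)`; it vanishes for `n < k` (and we also set
`G(0,0) = 0`, a value never used). -/
def G (n k : ℕ) : ℚ :=
  if k ≤ n ∧ (n, k) ≠ (0, 0) then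
    (n : ℚ) ^ 2 *
      (((2 * n).choose n : ℚ) * ((2 * n + 2 * k).choose (n + k)) *
        ((2 * n - 2 * k).choose (n - k)) * ((n + k).choose n)) /
      (2 ^ (8 * n - 2 * k - 4) * (2 * (n : ℚ) + 2 * k - 1) * ((2 * k).choose k))
  else 0

/-!
Both `F n k` and `G n k` are rational multiples of one hypergeometric term, `wzTerm n k`, and so
the Wilf–Zeilberger relation `F n k - F n (k + 1) = G (n + 1) (k + 1) - G n (k + 1)` becomes an
identity of rational functions once all terms are expressed through `wzTerm n k`. Summing it over
`n ≤ N` and `k < N` telescopes in both directions, and only the boundary values remain because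
`F n N = 0` for `n < N` and `G 0 k = 0`.
-/

section WZPair

open Finset

variable {A : Type*} [AddCommGroup A] {f g : ℕ → ℕ → A}

/-- A Wilf–Zeilberger pair in the convention `f(n, k - 1) - f(n, k) = g(n + 1, k) - g(n, k)` for
`k ≥ 1`, stated with `k + 1` in place of `k` to avoid truncated subtraction. -/
def IsWZPair (f g : ℕ → ℕ → A) : Prop :=
  ∀ n k, f n k - f n (k + 1) = g (n + 1) (k + 1) - g n (k + 1)

theorem IsWZPair.sum_range_sub_succ (h : IsWZPair f g) (N k : ℕ) :
    ∑ n ∈ range N, f n k - ∑ n ∈ range N, f n (k + 1) = g N (k + 1) - g 0 (k + 1) := by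
  rw [← sum_sub_distrib, sum_congr rfl fun n _ => h n k, sum_range_sub (g · (k + 1))]

theorem IsWZPair.sum_range_sub_sum_range (h : IsWZPair f g) (N K : ℕ) :
    ∑ n ∈ range N, f n 0 - ∑ n ∈ range N, f n K = ∑ k ∈ Icc 1 K, (g N k - g 0 k) := by
  induction K with
  | zero => simp
  | succ K ih =>
    rw [sum_Icc_succ_top (Nat.le_add_left 1 K), ← ih, ← h.sum_range_sub_succ N K,
      sub_add_sub_cancel]

end WZPair

section Binomial

variable {K : Type*} [Semifield K] [CharZero K]

theorem cast_centralBinom_succ (n : ℕ) :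
    ((n + 1).centralBinom : K) = 2 * (2 * n + 1) * n.centralBinom / (n + 1) := by
  rw [eq_div_iff n.cast_add_one_ne_zero, mul_comm]
  exact_mod_cast n.succ_mul_centralBinom_succ

theorem cast_choose_succ_succ (n k : ℕ) :
    ((n + 1).choose (k + 1) : K) = (n + 1) * n.choose k / (k + 1) := by
  rw [eq_div_iff k.cast_add_one_ne_zero]
  exact_mod_cast (n.add_one_mul_choose_eq k).symm

theorem cast_add_succ_choose (a b : ℕ) :
    ((a + b + 1).choose a : K) = (a + b + 1) * (a + b).choose a / (b + 1) := by
  rw [add_assoc, Nat.choose_symm_add, ← add_assoc, cast_choose_succ_succ, Nat.choose_symm_add]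
  push_cast
  rfl

end Binomial

/-- The hypergeometric term of which `F n k` and `G n k` are rational multiples. It vanishes for
`n < k`, so that its recurrences hold for all `n` and `k`. -/
def wzTerm (n k : ℕ) : ℚ :=
  if k ≤ n then
    n.centralBinom * (n + k).centralBinom * (n - k).centralBinom * (n + k).choose n /
      (2 ^ (8 * n - 2 * k) * k.centralBinom)
  else 0

theorem wzTerm_of_lt {n k : ℕ} (h : n < k) : wzTerm n k = 0 := if_neg h.not_ge

theorem wzTerm_add_left (k d : ℕ) :
    wzTerm (k + d) k =
      (k + d).centralBinom * (2 * k + d).centralBinom * d.centralBinom * (2 * k + d).choose k /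
        (2 ^ (6 * k + 8 * d) * k.centralBinom) := by
  have hadd : k + d + k = 2 * k + d := by ring
  have hexp : 8 * (k + d) - 2 * k = 6 * k + 8 * d := by lia
  rw [wzTerm, if_pos (Nat.le_add_right k d), Nat.choose_symm_add, Nat.add_sub_cancel_left, hadd,
    hexp]

theorem F_eq_mul_wzTerm (n k : ℕ) : F n k = (6 * n - 2 * k + 1) * wzTerm n k := by
  rw [F, wzTerm]
  split_ifs
  · simp only [Nat.centralBinom_eq_two_mul_choose, mul_add, Nat.mul_sub]
    ring
  · rw [mul_zero]

theorem G_eq_mul_wzTerm (n k : ℕ) :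
    G n k = 16 * n ^ 2 / (2 * n + 2 * k - 1) * wzTerm n k := by
  rcases n.eq_zero_or_pos with rfl | hn
  · simp [G]
  rcases lt_or_ge n k with hk | hk
  · rw [wzTerm_of_lt hk, mul_zero, G, if_neg fun h => hk.not_ge h.1]
  have hpow : (2 : ℚ) ^ (8 * n - 2 * k) = 2 ^ (8 * n - 2 * k - 4) * 16 := by
    rw [show 8 * n - 2 * k = 8 * n - 2 * k - 4 + 4 by lia, pow_add]
    norm_num
  rw [G, if_pos ⟨hk, by simp [hn.ne']⟩, wzTerm, if_pos hk, hpow]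
  simp only [Nat.centralBinom_eq_two_mul_choose, mul_add, Nat.mul_sub]
  field_simp

theorem two_mul_sub_sub_one_ne_zero (n k : ℕ) : 2 * ((n : ℚ) - k) - 1 ≠ 0 := by
  have h : 2 * ((n : ℤ) - k) - 1 ≠ 0 := by lia
  exact_mod_cast h

theorem wzTerm_succ_right (n k : ℕ) :
    wzTerm n (k + 1) =
      2 * (2 * n + 2 * k + 1) * (n - k) / ((2 * n - 2 * k - 1) * (2 * k + 1)) * wzTerm n k := by
  rcases lt_trichotomy n k with h | rfl | h
  · rw [wzTerm_of_lt h, wzTerm_of_lt (h.trans k.lt_succ_self), mul_zero]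
  · rw [wzTerm_of_lt n.lt_succ_self, sub_self, mul_zero, zero_div, zero_mul]
  obtain ⟨d, rfl⟩ := Nat.exists_eq_add_of_le (Nat.add_one_le_of_lt h)
  have hb : (k.centralBinom : ℚ) ≠ 0 := by exact_mod_cast k.centralBinom_ne_zero
  have hsub : 2 * ((k + 1 + d : ℕ) : ℚ) - 2 * k - 1 = 2 * d + 1 := by
    push_cast
    ring
  have hr := wzTerm_add_left (k + 1) d
  have hl := wzTerm_add_left k (d + 1)
  rw [show 2 * (k + 1) + d = 2 * k + d + 1 + 1 by ring] at hr
  rw [← add_assoc, ← add_assoc, add_right_comm k d 1] at hl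
  rw [hsub, hr, hl, cast_choose_succ_succ, cast_centralBinom_succ (2 * k + d + 1),
    cast_centralBinom_succ d, cast_centralBinom_succ k]
  push_cast
  field_simp
  ring

theorem wzTerm_succ_succ (n k : ℕ) :
    wzTerm (n + 1) (k + 1) =
      (2 * n + 1) * (2 * n + 2 * k + 1) * (2 * n + 2 * k + 3) /
        (16 * (n + 1) ^ 2 * (2 * k + 1)) * wzTerm n k := by
  rcases lt_or_ge n k with h | h
  · rw [wzTerm_of_lt h, wzTerm_of_lt (Nat.succ_lt_succ h), mul_zero]
  obtain ⟨d, rfl⟩ := Nat.exists_eq_add_of_le h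
  have hb : (k.centralBinom : ℚ) ≠ 0 := by exact_mod_cast k.centralBinom_ne_zero
  have hchoose : ((2 * k + d + 1).choose k : ℚ) =
      (2 * k + d + 1) * (2 * k + d).choose k / (k + d + 1) := by
    have := cast_add_succ_choose (K := ℚ) k (k + d)
    rw [← add_assoc, ← two_mul] at this
    rw [this]
    push_cast
    ring
  have hr := wzTerm_add_left (k + 1) d
  rw [show 2 * (k + 1) + d = 2 * k + d + 1 + 1 by ring, add_right_comm k 1 d] at hr
  rw [hr, wzTerm_add_left, cast_choose_succ_succ, hchoose, cast_centralBinom_succ (2 * k + d + 1),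
    cast_centralBinom_succ (2 * k + d), cast_centralBinom_succ (k + d), cast_centralBinom_succ k]
  push_cast
  field_simp
  ring

theorem isWZPair_F_G : IsWZPair F G := by
  intro n k
  have hodd := two_mul_sub_sub_one_ne_zero n k
  have hden : (2 * ((n + 1 : ℕ) : ℚ) + 2 * (k + 1 : ℕ) - 1) = 2 * n + 2 * k + 3 := by
    push_cast
    ring
  have hden' : (2 * (n : ℚ) + 2 * (k + 1 : ℕ) - 1) = 2 * n + 2 * k + 1 := by
    push_cast
    ring
  simp only [F_eq_mul_wzTerm, G_eq_mul_wzTerm]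
  rw [wzTerm_succ_succ, wzTerm_succ_right, hden, hden']
  push_cast
  field_simp
  ring

theorem F_of_lt {n k : ℕ} (h : n < k) : F n k = 0 := if_neg h.not_ge

theorem G_zero_left (k : ℕ) : G 0 k = 0 := by simp [G]

open Finset in
theorem wz_summation_identity_general (N : ℕ) :
    ∑ n ∈ range (N + 1), F n 0 = F N N + ∑ k ∈ Icc 1 N, G (N + 1) k := by
  have hF : ∑ n ∈ range (N + 1), F n N = F N N := by
    rw [sum_range_succ, sum_eq_zero fun n hn => F_of_lt (mem_range.mp hn), zero_add]
  have hsum := isWZPair_F_G.sum_range_sub_sum_range (N + 1) N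
  simp only [G_zero_left, sub_zero, hF] at hsum
  exact sub_eq_iff_eq_add'.mp hsum

theorem wz_summation_identity (p : ℕ) (hp : p.Prime) (hp3 : 3 < p) :
    ∑ n ∈ Finset.range ((p - 1) / 2 + 1), F n 0 =
      F ((p - 1) / 2) ((p - 1) / 2) + ∑ k ∈ Finset.Icc 1 ((p - 1) / 2), G ((p + 1) / 2) k := by
  rw [show (p + 1) / 2 = (p - 1) / 2 + 1 by lia]
  exact wz_summation_identity_general _
end

section
/- Let p > 3 be a prime. Then ∑_{k=1}^{(p-1)/2} 1/(k(2k-1)^2) ≡ -4·q_p(2) modulo p (as rational numbers). -/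
/-- Two rationals `a` and `b` are congruent modulo `p^r`:
the `p`-adic valuation of `a - b` is at least `r`, i.e. `a - b = c * p^r`
with the denominator of `c` not divisible by `p`. -/
def ratCongr (p r : ℕ) (a b : ℚ) : Prop :=
  ∃ c : ℚ, a - b = c * (p : ℚ) ^ r ∧ ¬ (p ∣ c.den)

/-- The Fermat quotient `q_p(2) = (2^(p-1) - 1)/p` (an integer for odd primes),
viewed as a rational number. -/
def fermatQ (p : ℕ) : ℚ := ((2 : ℚ) ^ (p - 1) - 1) / p

/-!
Partial fractions give `1 / (k (2k - 1)²) = 2 / (2k - 1)² - 2 (1 / (2k - 1) - 1 / (2k))`, so the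
sum is exactly `2A - 2B`, where `A` is the sum of the inverse squares of the odd numbers below `p`
and `B = 1 - 1/2 + 1/3 - ⋯ - 1/(p - 1)`.

Modulo `p`, the odd numbers below `p` represent the nonzero residues up to sign, hence `2A` is the
sum of the inverse squares, i.e. of the squares, of all elements of `ZMod p`, and this vanishes
since `2 < p - 1`. Integrating the binomial expansion of `(1 + t)^(p - 1)` over `[0, 1]` gives
`2 q_p(2) = ∑ j < p - 1, (p - 1).choose j / (j + 1)`, and `(p - 1).choose j ≡ (-1)^j` turns this
sum into `B`.
-/

open Finset

namespace ratCongr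

variable {p r : ℕ} [Fact p.Prime] {a b c d : ℚ}

protected theorem refl (a : ℚ) : ratCongr p r a a :=
  ⟨0, by simp, by simpa using (Fact.out : p.Prime).ne_one⟩

protected theorem add (hab : ratCongr p r a b) (hcd : ratCongr p r c d) :
    ratCongr p r (a + c) (b + d) := by
  obtain ⟨x, hx, hxp⟩ := hab
  obtain ⟨y, hy, hyp⟩ := hcd
  exact ⟨x + y, by linear_combination hx + hy, fun h =>
    ((Fact.out : p.Prime).dvd_mul.mp (h.trans (Rat.add_den_dvd x y))).elim hxp hyp⟩

protected theorem const_mul (hab : ratCongr p r a b) (hc : ¬ p ∣ c.den) :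
    ratCongr p r (c * a) (c * b) := by
  obtain ⟨x, hx, hxp⟩ := hab
  exact ⟨c * x, by linear_combination c * hx, fun h =>
    ((Fact.out : p.Prime).dvd_mul.mp (h.trans (Rat.mul_den_dvd c x))).elim hc hxp⟩

protected theorem intCast_mul (hab : ratCongr p r a b) (n : ℤ) :
    ratCongr p r (n * a) (n * b) :=
  hab.const_mul (by simpa using (Fact.out : p.Prime).ne_one)

protected theorem trans (hab : ratCongr p r a b) (hbc : ratCongr p r b c) :
    ratCongr p r a c := by
  simpa [ratCongr, add_sub_add_comm] using hab.add hbc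

protected theorem sum {ι : Type*} {s : Finset ι} {f g : ι → ℚ}
    (h : ∀ i ∈ s, ratCongr p r (f i) (g i)) : ratCongr p r (∑ i ∈ s, f i) (∑ i ∈ s, g i) := by
  induction s using Finset.cons_induction with
  | empty => exact ratCongr.refl 0
  | cons i s hi ih =>
    rw [forall_mem_cons] at h
    simpa only [sum_cons] using h.1.add (ih h.2)

theorem intCast_div_intCast {a b m n : ℤ} (hm : ¬ (p : ℤ) ∣ m) (hn : ¬ (p : ℤ) ∣ n)
    (h : a * n ≡ b * m [ZMOD p ^ r]) : ratCongr p r (a / m) (b / n) := by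
  obtain ⟨t, ht⟩ := h.symm.dvd
  have hm0 : (m : ℚ) ≠ 0 := Int.cast_ne_zero.mpr fun h => hm (h ▸ dvd_zero _)
  have hn0 : (n : ℚ) ≠ 0 := Int.cast_ne_zero.mpr fun h => hn (h ▸ dvd_zero _)
  refine ⟨t / (m * n), ?_, fun hdvd => ?_⟩
  · have ht' : (a * n - b * m : ℚ) = p ^ r * t := mod_cast ht
    field_simp
    linear_combination ht'
  · have hden : (((t : ℚ) / (m * n)).den : ℤ) ∣ m * n := by
      simpa [Rat.divInt_eq_div] using Rat.den_dvd t (m * n)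
    exact ((Nat.prime_iff_prime_int.mp Fact.out).dvd_or_dvd
      ((Int.natCast_dvd_natCast.mpr hdvd).trans hden)).elim hm hn

theorem intCast_div_zmod_val (a : ℤ) {m : ℤ} (hm : (m : ZMod p) ≠ 0) :
    ratCongr p 1 (a / m) ((a / m : ZMod p).val) := by
  have hmod : a * 1 ≡ (a / m : ZMod p).val * m [ZMOD p ^ 1] := by
    rw [pow_one, ← ZMod.intCast_eq_intCast_iff]
    simp [hm]
  simpa using intCast_div_intCast ((ZMod.intCast_zmod_eq_zero_iff_dvd m p).not.mp hm)
    (Nat.prime_iff_prime_int.mp Fact.out).not_dvd_one hmod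

theorem sum_intCast_div_zero {ι : Type*} {s : Finset ι} {a m : ι → ℤ}
    (hm : ∀ i ∈ s, (m i : ZMod p) ≠ 0) (h : ∑ i ∈ s, (a i / m i : ZMod p) = 0) :
    ratCongr p 1 (∑ i ∈ s, (a i / m i : ℚ)) 0 := by
  refine (ratCongr.sum fun i hi => intCast_div_zmod_val (a i) (hm i hi)).trans ?_
  obtain ⟨t, ht⟩ : p ∣ ∑ i ∈ s, (a i / m i : ZMod p).val := by
    rw [← ZMod.natCast_eq_zero_iff]
    simpa using h
  rw [← Nat.cast_sum, ht]
  exact ⟨t, by push_cast; ring, by simpa using (Fact.out : p.Prime).ne_one⟩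

end ratCongr

theorem one_div_mul_two_mul_sub_one_sq {K : Type*} [Field K] {k : K} (h2 : (2 : K) ≠ 0)
    (hk : k ≠ 0) (hk' : 2 * k - 1 ≠ 0) :
    1 / (k * (2 * k - 1) ^ 2) =
      2 * (1 / (2 * k - 1) ^ 2) - 2 * (1 / (2 * k - 1) - 1 / (2 * k)) := by
  generalize hm : 2 * k - 1 = m at hk' ⊢
  field_simp
  linear_combination (m - 1) * hm

theorem sum_one_div_mul_two_mul_sub_one_sq (K : Type*) [Field K] [CharZero K] (n : ℕ) :
    ∑ k ∈ Icc 1 n, 1 / ((k : K) * (2 * k - 1) ^ 2) =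
      2 * ∑ i ∈ range n, 1 / (2 * (i : K) + 1) ^ 2 -
        2 * ∑ j ∈ range (2 * n), (-1) ^ j / ((j : K) + 1) := by
  induction n with
  | zero => simp
  | succ n ih =>
    have hodd : 2 * ((n + 1 : ℕ) : K) - 1 = 2 * n + 1 := by push_cast; ring
    have heven : 2 * ((n + 1 : ℕ) : K) = 2 * n + 1 + 1 := by push_cast; ring
    have hodd0 : 2 * (n : K) + 1 ≠ 0 := mod_cast (2 * n).succ_ne_zero
    rw [sum_Icc_succ_top (by omega), ih, one_div_mul_two_mul_sub_one_sq two_ne_zero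
      (mod_cast n.succ_ne_zero) (hodd ▸ hodd0), hodd, heven, mul_add_one 2 n, sum_range_succ,
      sum_range_succ, sum_range_succ, pow_succ (-1 : K), pow_mul, neg_one_sq, one_pow]
    push_cast
    ring

theorem sum_range_choose_div_add_one (K : Type*) [Field K] [CharZero K] (n : ℕ) :
    ∑ j ∈ range (n + 1), (n.choose j : K) / (j + 1) = (2 ^ (n + 1) - 1) / (n + 1) := by
  have hn : (n : K) + 1 ≠ 0 := mod_cast n.succ_ne_zero
  have hterm (j : ℕ) : (n.choose j : K) / (j + 1) * (n + 1) = (n + 1).choose (j + 1) := by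
    have hj : (j : K) + 1 ≠ 0 := mod_cast j.succ_ne_zero
    rw [div_mul_eq_mul_div, div_eq_iff hj, mul_comm]
    exact_mod_cast Nat.add_one_mul_choose_eq n j
  have hsum : ∑ j ∈ range (n + 1), ((n + 1).choose (j + 1) : K) + 1 = 2 ^ (n + 1) := by
    have h := Nat.sum_range_choose (n + 1)
    rw [sum_range_succ', Nat.choose_zero_right] at h
    exact_mod_cast h
  rw [eq_div_iff hn, sum_mul, sum_congr rfl fun j _ => hterm j, ← hsum, add_sub_cancel_right]

theorem two_mul_fermatQ {p : ℕ} (hp : p ≠ 0) :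
    2 * fermatQ p = ∑ j ∈ range (p - 1), ((p - 1).choose j : ℚ) / (j + 1) := by
  obtain ⟨n, rfl⟩ := Nat.exists_eq_add_one_of_ne_zero hp
  have h := sum_range_choose_div_add_one ℚ n
  rw [sum_range_succ, Nat.choose_self, ← eq_sub_iff_add_eq] at h
  rw [Nat.add_sub_cancel, h, fermatQ, Nat.add_sub_cancel]
  push_cast
  ring

theorem natCast_choose_sub_one {R : Type*} [Ring R] {p : ℕ} [CharP R p] (hp : p.Prime) {j : ℕ}
    (hj : j < p) : ((p - 1).choose j : R) = (-1) ^ j := by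
  induction j with
  | zero => simp
  | succ j ih =>
    have hpascal : (p - 1).choose j + (p - 1).choose (j + 1) = p.choose (j + 1) := by
      rw [← Nat.choose_succ_succ', Nat.sub_add_cancel hp.one_le]
    have hzero : (p.choose (j + 1) : R) = 0 :=
      (CharP.cast_eq_zero_iff R p _).mpr (hp.dvd_choose_self j.succ_ne_zero hj)
    rw [← hpascal, Nat.cast_add, ih (by omega)] at hzero
    rw [pow_succ, mul_neg_one, eq_neg_iff_add_eq_zero, add_comm, hzero]

theorem alternating_sum_ratCongr_two_mul_fermatQ (p : ℕ) [Fact p.Prime] :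
    ratCongr p 1 (∑ j ∈ range (p - 1), (-1) ^ j / ((j : ℚ) + 1)) (2 * fermatQ p) := by
  have hp : p.Prime := Fact.out
  rw [two_mul_fermatQ hp.ne_zero]
  refine ratCongr.sum fun j hj => ?_
  have hj : j + 1 < p := by have := mem_range.mp hj; omega
  have hndvd : ¬ (p : ℤ) ∣ (j + 1 : ℕ) :=
    Int.natCast_dvd_natCast.not.mpr (Nat.not_dvd_of_pos_of_lt j.succ_pos hj)
  have hmod : (-1) ^ j ≡ (p - 1).choose j [ZMOD p ^ 1] := by
    rw [pow_one, ← ZMod.intCast_eq_intCast_iff]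
    push_cast
    exact (natCast_choose_sub_one hp (by omega)).symm
  simpa using ratCongr.intCast_div_intCast hndvd hndvd (hmod.mul_right _)

theorem sum_range_two_mul {M : Type*} [AddCommMonoid M] (f : ℕ → M) (n : ℕ) :
    ∑ j ∈ range (2 * n), f j = ∑ i ∈ range n, (f (2 * i) + f (2 * i + 1)) := by
  induction n with
  | zero => simp
  | succ n ih => rw [mul_add_one, sum_range_succ, sum_range_succ, ih, sum_range_succ, add_assoc]

theorem sum_zmod_eq_of_even {M : Type*} [AddCommMonoid M] {n : ℕ} {f : ZMod (2 * n + 1) → M}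
    (hf : f.Even) : ∑ x, f x = f 0 + 2 • ∑ i ∈ range n, f (2 * i + 1) := by
  have hrange : ∑ x, f x = ∑ i ∈ range (2 * n + 1), f i := by
    rw [← Fin.sum_univ_eq_sum_range (fun i => f i)]
    exact sum_congr rfl fun x _ => congrArg f (ZMod.natCast_zmod_val x).symm
  have hreflect : ∑ i ∈ range n, f ((2 * i + 1 + 1 : ℕ)) = ∑ i ∈ range n, f (2 * i + 1) := by
    rw [← sum_range_reflect]
    refine sum_congr rfl fun i hi => ?_
    obtain ⟨k, rfl⟩ := Nat.exists_eq_add_of_lt (mem_range.mp hi)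
    rw [← hf, show i + k + 1 - 1 - i = k by omega]
    congr 1
    have hp := ZMod.natCast_self (2 * (i + k + 1) + 1)
    push_cast at hp ⊢
    linear_combination -hp
  rw [hrange, sum_range_succ', sum_range_two_mul, sum_add_distrib, hreflect, two_nsmul, add_comm]
  simp

theorem sum_one_div_odd_pow_eq_zero {n e : ℕ} [Fact (2 * n + 1).Prime] (he : Even e)
    (he0 : e ≠ 0) (hen : e < 2 * n) :
    ∑ i ∈ range n, 1 / (2 * (i : ZMod (2 * n + 1)) + 1) ^ e = 0 := by
  have htotal : ∑ x : ZMod (2 * n + 1), 1 / x ^ e = 0 := by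
    rw [← FiniteField.sum_pow_lt_card_sub_one (ZMod (2 * n + 1)) e (by simpa using hen),
      ← Equiv.sum_comp (Equiv.inv (ZMod (2 * n + 1)))]
    simp
  have h2 : (2 : ZMod (2 * n + 1)) ≠ 0 := Ring.two_ne_zero (by rw [ZMod.ringChar_zmod_n]; omega)
  rw [sum_zmod_eq_of_even fun x => by rw [he.neg_pow], zero_pow he0, div_zero, zero_add,
    two_nsmul, ← two_mul] at htotal
  exact (mul_eq_zero.mp htotal).resolve_left h2

theorem sum_one_div_odd_sq_ratCongr_zero {n : ℕ} [Fact (2 * n + 1).Prime] (hn : 1 < n) :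
    ratCongr (2 * n + 1) 1 (∑ i ∈ range n, 1 / (2 * (i : ℚ) + 1) ^ 2) 0 := by
  have hodd : ∀ i ∈ range n, (((2 * i + 1) ^ 2 : ℤ) : ZMod (2 * n + 1)) ≠ 0 := fun i hi => by
    have hlt := mem_range.mp hi
    have h : ((2 * i + 1 : ℕ) : ZMod (2 * n + 1)) ≠ 0 :=
      (ZMod.natCast_eq_zero_iff _ _).not.mpr (Nat.not_dvd_of_pos_of_lt (by omega) (by omega))
    exact_mod_cast pow_ne_zero 2 h
  have hzero : ∑ i ∈ range n, (((1 : ℤ) : ZMod (2 * n + 1)) / ((2 * i + 1) ^ 2 : ℤ)) = 0 := by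
    exact_mod_cast sum_one_div_odd_pow_eq_zero even_two two_ne_zero (by omega : 2 < 2 * n)
  simpa using ratCongr.sum_intCast_div_zero (a := fun _ => 1) hodd hzero

theorem sum_inv_k_2k_sub_one_sq (p : ℕ) (hp : p.Prime) (hp3 : 3 < p) :
    ratCongr p 1
      (∑ k ∈ Finset.Icc 1 ((p - 1) / 2), 1 / ((k : ℚ) * (2 * k - 1) ^ 2))
      (-4 * fermatQ p) := by
  have : Fact p.Prime := ⟨hp⟩
  obtain ⟨n, rfl⟩ : Odd p := hp.odd_of_ne_two (by omega)
  have hsquares := (sum_one_div_odd_sq_ratCongr_zero (n := n) (by omega)).intCast_mul 2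
  have halternating := (alternating_sum_ratCongr_two_mul_fermatQ (2 * n + 1)).intCast_mul (-2)
  rw [Nat.add_sub_cancel] at halternating
  rw [show (2 * n + 1 - 1) / 2 = n by omega, sum_one_div_mul_two_mul_sub_one_sq]
  convert hsquares.add halternating using 1
  · push_cast; ring
  · push_cast; ring
end

section
/- Let p > 3 be a prime. Then ∑_{k=1}^{(p-1)/2} H_{2k}/k ≡ q_p(2)^2 - p·q_p(2)^3 + (7/24)·p·B_{p-3} modulo p^2 (as rational numbers). -/
/-!
Let `p = 2 m + 1` and compute in a commutative ring with `p ^ 2 = 0`, where every positive integer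
below `p` is a unit. The even terms of `H_{2k}` add up to `H_k / 2`, and the reflection `j ↦ p - j`
turns the odd ones into `-(H_m - H_{m-k}) / 2` up to a multiple of `p`. So the sum of the
`H_{2k} / k` is a combination of products and convolutions of harmonic numbers, which partial
fractions of `1 / (k (n - k))` evaluate.

A sum over `1 ≤ k < p` splits both into the pairs `{k, p - k}` and into the pairs `{2k, p - 2k}`.
Comparing the two splittings for `1 / k ^ 2`, `p H_k / k ^ 2` and `k ^ (p - 3)` gives linear
relations that express `H_m^(2)`, `p ∑ H_k / k ^ 2` and the power sum as multiples of `p H_m^(3)`.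
The even-index half of the expansion of `(1 + 1) ^ p` expresses `H_m` through the Fermat
quotient, and Faulhaber's formula turns the power sum into `p B_{p-3}`.

Identities are kept multiplied by constants such as `4`, `8` and `12` so that no
inverse of `2` or `3` appears; the constants are units, and are cancelled at the end.
-/

open Finset
open scoped Ring

section Reindexing

variable {M : Type*} [AddCommMonoid M] (f : ℕ → M)

lemma sum_Icc_reflect (n : ℕ) : ∑ k ∈ Icc 1 n, f (n + 1 - k) = ∑ k ∈ Icc 1 n, f k := by
  have h := sum_Ico_reflect f 1 (Nat.le_succ (n + 1))
  rwa [show n + 1 + 1 - (n + 1) = 1 by omega] at h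

lemma sum_Icc_eq_sum_add_reflect {m p : ℕ} (hm : p = 2 * m + 1) :
    ∑ k ∈ Icc 1 (p - 1), f k = ∑ k ∈ Icc 1 m, (f k + f (p - k)) := by
  subst hm
  have hupper := sum_Ico_reflect f 1 (show m + 1 ≤ 2 * m + 1 + 1 by omega)
  rw [show 2 * m + 1 + 1 - (m + 1) = m + 1 by omega] at hupper
  rw [sum_add_distrib]
  exact (sum_Ico_consecutive f (by omega) (by omega)).symm.trans (congrArg _ hupper.symm)

lemma sum_Icc_two_mul (m : ℕ) :
    ∑ k ∈ Icc 1 (2 * m), f k = ∑ k ∈ Icc 1 m, (f (2 * k) + f (2 * k - 1)) := by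
  induction m with
  | zero => simp
  | succ m ih =>
    rw [sum_Icc_succ_top (by omega), ← ih, show 2 * (m + 1) = 2 * m + 1 + 1 by ring,
      sum_Icc_succ_top (by omega), sum_Icc_succ_top (by omega), add_assoc,
      add_comm (f (2 * m + 1)), Nat.add_sub_cancel]

lemma sum_Icc_eq_sum_even_add_reflect {m p : ℕ} (hm : p = 2 * m + 1) :
    ∑ k ∈ Icc 1 (p - 1), f k = ∑ k ∈ Icc 1 m, (f (2 * k) + f (p - 2 * k)) := by
  subst hm
  rw [Nat.add_sub_cancel, sum_Icc_two_mul, sum_add_distrib, sum_add_distrib,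
    ← sum_Icc_reflect (fun k => f (2 * k - 1))]
  congr 1
  refine sum_congr rfl fun k _ => congrArg f ?_
  omega

end Reindexing

/-- The generalized harmonic number `H_n^(r) = ∑ 1 / k ^ r` over `1 ≤ k ≤ n`, with values in an
arbitrary commutative ring; terms with `k` not invertible are junk, since then `k⁻¹ʳ = 0`. -/
noncomputable def harmonicSum (A : Type*) [CommRing A] (r n : ℕ) : A :=
  ∑ k ∈ Icc 1 n, (k : A)⁻¹ʳ ^ r

section HarmonicSum

variable {A : Type*} [CommRing A]

lemma map_ringInverse {B : Type*} [CommRing B] (f : A →+* B) {a : A} (ha : IsUnit a) :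
    f a⁻¹ʳ = (f a)⁻¹ʳ :=
  (ha.map f).mul_left_cancel <| by
    rw [← map_mul, Ring.mul_inverse_cancel a ha, map_one, Ring.mul_inverse_cancel _ (ha.map f)]

lemma two_mul_inverse_two_mul {k : ℕ} (hk : IsUnit ((2 * k : ℕ) : A)) :
    2 * ((2 * k : ℕ) : A)⁻¹ʳ = (k : A)⁻¹ʳ := by
  have hinv := Ring.mul_inverse_cancel _ hk
  rw [Nat.cast_mul] at hk
  have hunit := isUnit_of_mul_isUnit_right hk
  refine hunit.mul_left_cancel ?_
  rw [Ring.mul_inverse_cancel _ hunit]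
  rw [← hinv]
  push_cast
  ring

lemma harmonicSum_def (r n : ℕ) : harmonicSum A r n = ∑ k ∈ Icc 1 n, (k : A)⁻¹ʳ ^ r := rfl

lemma harmonicSum_one (n : ℕ) : harmonicSum A 1 n = ∑ k ∈ Icc 1 n, (k : A)⁻¹ʳ := by
  simp only [harmonicSum, pow_one]

@[simp]
lemma harmonicSum_zero (r : ℕ) : harmonicSum A r 0 = 0 := by simp [harmonicSum]

lemma harmonicSum_succ (r n : ℕ) :
    harmonicSum A r (n + 1) = harmonicSum A r n + ((n + 1 : ℕ) : A)⁻¹ʳ ^ r :=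
  sum_Icc_succ_top (by omega) _

lemma map_harmonicSum {B : Type*} [CommRing B] (f : A →+* B) (r : ℕ) {n : ℕ}
    (hn : ∀ k, 0 < k → k ≤ n → IsUnit (k : A)) :
    f (harmonicSum A r n) = harmonicSum B r n := by
  rw [harmonicSum, map_sum]
  refine sum_congr rfl fun k hk => ?_
  rw [mem_Icc] at hk
  rw [map_pow, map_ringInverse f (hn k hk.1 hk.2), map_natCast]

lemma map_sum_harmonicSum_two_mul_mul {B : Type*} [CommRing B] (f : A →+* B) {m : ℕ}
    (hm : ∀ k, 0 < k → k ≤ 2 * m → IsUnit (k : A)) :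
    f (∑ k ∈ Icc 1 m, harmonicSum A 1 (2 * k) * (k : A)⁻¹ʳ)
      = ∑ k ∈ Icc 1 m, harmonicSum B 1 (2 * k) * (k : B)⁻¹ʳ := by
  rw [map_sum]
  refine sum_congr rfl fun k hk => ?_
  rw [mem_Icc] at hk
  rw [map_mul, map_harmonicSum f 1 fun j h0 hj => hm j h0 (by omega),
    map_ringInverse f (hm k hk.1 (by omega)), map_natCast]

lemma harmonicSum_rat_one (n : ℕ) : harmonicSum ℚ 1 n = harmonic n := by
  rw [harmonicSum_one, harmonic_eq_sum_Icc]
  simp only [Ring.inverse_eq_inv]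

lemma harmonicSum_mul_harmonicSum (r s n : ℕ) :
    harmonicSum A r n * harmonicSum A s n + harmonicSum A (r + s) n
      = ∑ k ∈ Icc 1 n,
          (harmonicSum A r k * (k : A)⁻¹ʳ ^ s + harmonicSum A s k * (k : A)⁻¹ʳ ^ r) := by
  induction n with
  | zero => simp
  | succ n ih =>
    rw [sum_Icc_succ_top (by omega), ← ih]
    simp only [harmonicSum_succ]
    ring

lemma sum_harmonicSum_sub_mul_comm (r s n : ℕ) :
    ∑ k ∈ Icc 1 n, harmonicSum A r (n - k) * (k : A)⁻¹ʳ ^ s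
      = ∑ k ∈ Icc 1 n, harmonicSum A s (n - k) * (k : A)⁻¹ʳ ^ r := by
  simp only [harmonicSum, sum_mul]
  rw [sum_comm' (t' := Icc 1 n) (s' := fun j => Icc 1 (n - j))]
  · simp only [mul_comm]
  · intro j k
    simp only [mem_Icc]
    omega

lemma sum_harmonicSum_succ_sub_mul (r s n : ℕ) :
    ∑ k ∈ Icc 1 (n + 1), harmonicSum A r (n + 1 - k) * (k : A)⁻¹ʳ ^ s
      = ∑ k ∈ Icc 1 n, harmonicSum A r (n - k) * (k : A)⁻¹ʳ ^ s
        + ∑ k ∈ Icc 1 n, ((n + 1 - k : ℕ) : A)⁻¹ʳ ^ r * (k : A)⁻¹ʳ ^ s := by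
  rw [sum_Icc_succ_top (by omega), Nat.sub_self, harmonicSum_zero, zero_mul, add_zero,
    ← sum_add_distrib]
  refine sum_congr rfl fun k hk => ?_
  rw [Nat.sub_add_comm (mem_Icc.1 hk).2, harmonicSum_succ, add_mul]

lemma inverse_mul_inverse_eq {a b : A} (ha : IsUnit a) (hb : IsUnit b) (hab : IsUnit (a + b)) :
    a⁻¹ʳ * b⁻¹ʳ = (a + b)⁻¹ʳ * (a⁻¹ʳ + b⁻¹ʳ) := by
  have hsum := Ring.mul_inverse_cancel _ hab
  linear_combination (-a⁻¹ʳ * b⁻¹ʳ) * hsum + (a + b)⁻¹ʳ * b⁻¹ʳ * Ring.mul_inverse_cancel _ ha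
    + (a + b)⁻¹ʳ * a⁻¹ʳ * Ring.mul_inverse_cancel _ hb

lemma inverse_succ_sub_mul_inverse {n k : ℕ} (hn : ∀ j, 0 < j → j ≤ n + 1 → IsUnit (j : A))
    (hk : k ∈ Icc 1 n) :
    ((n + 1 - k : ℕ) : A)⁻¹ʳ * (k : A)⁻¹ʳ
      = ((n + 1 : ℕ) : A)⁻¹ʳ * (((n + 1 - k : ℕ) : A)⁻¹ʳ + (k : A)⁻¹ʳ) := by
  rw [mem_Icc] at hk
  have hsum : ((n + 1 - k : ℕ) : A) + k = (n + 1 : ℕ) := by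
    rw [← Nat.cast_add, Nat.sub_add_cancel (by omega)]
  rw [← hsum]
  exact inverse_mul_inverse_eq (hn _ (by omega) (by omega)) (hn _ (by omega) (by omega))
    (hsum ▸ hn _ (by omega) le_rfl)

lemma sum_inverse_succ_sub_mul_inverse {n : ℕ} (hn : ∀ k, 0 < k → k ≤ n + 1 → IsUnit (k : A)) :
    ∑ k ∈ Icc 1 n, ((n + 1 - k : ℕ) : A)⁻¹ʳ * (k : A)⁻¹ʳ
      = 2 * ((n + 1 : ℕ) : A)⁻¹ʳ * harmonicSum A 1 n := by
  rw [sum_congr rfl fun k hk => inverse_succ_sub_mul_inverse hn hk, ← mul_sum, sum_add_distrib,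
    sum_Icc_reflect fun k => (k : A)⁻¹ʳ]
  simp only [harmonicSum, pow_one]
  ring

lemma sum_inverse_succ_sub_mul_inverse_sq {n : ℕ}
    (hn : ∀ k, 0 < k → k ≤ n + 1 → IsUnit (k : A)) :
    ∑ k ∈ Icc 1 n, ((n + 1 - k : ℕ) : A)⁻¹ʳ * (k : A)⁻¹ʳ ^ 2
      = ((n + 1 : ℕ) : A)⁻¹ʳ * harmonicSum A 2 n
        + 2 * ((n + 1 : ℕ) : A)⁻¹ʳ ^ 2 * harmonicSum A 1 n := by
  have hterm : ∀ k ∈ Icc 1 n, ((n + 1 - k : ℕ) : A)⁻¹ʳ * (k : A)⁻¹ʳ ^ 2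
      = ((n + 1 : ℕ) : A)⁻¹ʳ * (((n + 1 - k : ℕ) : A)⁻¹ʳ * (k : A)⁻¹ʳ + (k : A)⁻¹ʳ ^ 2) :=
    fun k hk => by linear_combination (k : A)⁻¹ʳ * inverse_succ_sub_mul_inverse hn hk
  rw [sum_congr rfl hterm, ← mul_sum, sum_add_distrib, sum_inverse_succ_sub_mul_inverse hn,
    ← harmonicSum]
  ring

lemma sum_harmonicSum_sub_mul {n : ℕ} (hn : ∀ k, 0 < k → k ≤ n → IsUnit (k : A)) :
    ∑ k ∈ Icc 1 n, harmonicSum A 1 (n - k) * (k : A)⁻¹ʳ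
      = harmonicSum A 1 n ^ 2 - harmonicSum A 2 n := by
  induction n with
  | zero => simp
  | succ n ih =>
    have hstep := sum_harmonicSum_succ_sub_mul (A := A) 1 1 n
    simp only [pow_one] at hstep
    rw [hstep, ih fun k h0 hk => hn k h0 (by omega), sum_inverse_succ_sub_mul_inverse hn,
      harmonicSum_succ, harmonicSum_succ]
    ring

lemma sum_harmonicSum_sub_mul_sq {n : ℕ} (hn : ∀ k, 0 < k → k ≤ n → IsUnit (k : A)) :
    ∑ k ∈ Icc 1 n, harmonicSum A 1 (n - k) * (k : A)⁻¹ʳ ^ 2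
      = harmonicSum A 1 n * harmonicSum A 2 n + ∑ k ∈ Icc 1 n, harmonicSum A 1 k * (k : A)⁻¹ʳ ^ 2
        - 2 * harmonicSum A 3 n := by
  induction n with
  | zero => simp
  | succ n ih =>
    have hstep := sum_harmonicSum_succ_sub_mul (A := A) 1 2 n
    simp only [pow_one] at hstep
    rw [hstep, ih fun k h0 hk => hn k h0 (by omega), sum_inverse_succ_sub_mul_inverse_sq hn,
      sum_Icc_succ_top (by omega)]
    simp only [harmonicSum_succ]
    ring

end HarmonicSum

lemma coprime_two_pow_mul_three {p : ℕ} (hp : p.Prime) (hp3 : 3 < p) (n : ℕ) :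
    p.Coprime (2 ^ n * 3) :=
  ((Nat.coprime_of_lt_prime two_ne_zero (by omega) hp).pow_right n).mul_right
    (Nat.coprime_of_lt_prime three_ne_zero hp3 hp)

section SqEqZero

variable {A : Type*} [CommRing A]

lemma isUnit_natCast_of_coprime {n k : ℕ} (hn : IsNilpotent (n : A)) (hk : n.Coprime k) :
    IsUnit (k : A) := by
  obtain ⟨a, b, hab⟩ := Nat.isCoprime_iff_coprime.2 hk
  have hab' : (b : A) * k = 1 - a * n := by
    rw [eq_sub_iff_add_eq', ← Int.cast_natCast n, ← Int.cast_natCast k]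
    exact_mod_cast congrArg (Int.cast (R := A)) hab
  have hunit : IsUnit ((b : A) * k) :=
    hab' ▸ ((Commute.all (a : A) n).isNilpotent_mul_left hn).isUnit_one_sub
  exact isUnit_of_mul_isUnit_right hunit

variable {p : ℕ} [Fact p.Prime]

lemma isUnit_natCast_of_lt (hA : (p : A) ^ 2 = 0) {k : ℕ} (h0 : 0 < k) (hk : k < p) :
    IsUnit (k : A) :=
  isUnit_natCast_of_coprime ⟨2, hA⟩ (Nat.coprime_of_lt_prime h0.ne' hk Fact.out)

lemma isUnit_twelve (hA : (p : A) ^ 2 = 0) (hp3 : 3 < p) : IsUnit (12 : A) := by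
  exact_mod_cast isUnit_natCast_of_coprime ⟨2, hA⟩ (coprime_two_pow_mul_three Fact.out hp3 2)

lemma isUnit_natCast_of_le (hA : (p : A) ^ 2 = 0) {n : ℕ} (hn : n < p) :
    ∀ k, 0 < k → k ≤ n → IsUnit (k : A) :=
  fun _ h0 hk => isUnit_natCast_of_lt hA h0 (hk.trans_lt hn)

lemma inverse_natCast_sub (hA : (p : A) ^ 2 = 0) {k : ℕ} (h0 : 0 < k) (hk : k < p) :
    ((p - k : ℕ) : A)⁻¹ʳ = -(k : A)⁻¹ʳ - p * (k : A)⁻¹ʳ ^ 2 := by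
  have hinv := Ring.mul_inverse_cancel _ (isUnit_natCast_of_lt hA h0 hk)
  have hunit := isUnit_natCast_of_lt hA (Nat.sub_pos_of_lt hk) (Nat.sub_lt (by omega) h0)
  refine hunit.mul_left_cancel ?_
  rw [Ring.mul_inverse_cancel _ hunit, Nat.cast_sub hk.le]
  linear_combination (-1 - p * (k : A)⁻¹ʳ) * hinv + (k : A)⁻¹ʳ ^ 2 * hA

lemma mul_inverse_natCast_sub (hA : (p : A) ^ 2 = 0) {k : ℕ} (h0 : 0 < k) (hk : k < p) :
    p * ((p - k : ℕ) : A)⁻¹ʳ = -(p * (k : A)⁻¹ʳ) := by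
  linear_combination p * inverse_natCast_sub hA h0 hk - (k : A)⁻¹ʳ ^ 2 * hA

lemma four_mul_inverse_sub_two_mul (hA : (p : A) ^ 2 = 0) {k : ℕ} (h0 : 0 < k)
    (hk : 2 * k < p) :
    4 * ((p - 2 * k : ℕ) : A)⁻¹ʳ = -(2 * (k : A)⁻¹ʳ) - p * (k : A)⁻¹ʳ ^ 2 := by
  have hdouble := two_mul_inverse_two_mul (isUnit_natCast_of_lt hA (by omega) hk)
  rw [inverse_natCast_sub hA (by omega) hk, ← hdouble]
  ring

variable {m : ℕ}

lemma mul_harmonicSum_pred (hA : (p : A) ^ 2 = 0) (hm : p = 2 * m + 1) :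
    p * harmonicSum A 1 (p - 1) = 0 := by
  rw [harmonicSum, sum_Icc_eq_sum_add_reflect _ hm, mul_sum]
  refine sum_eq_zero fun k hk => ?_
  rw [mem_Icc] at hk
  linear_combination mul_inverse_natCast_sub hA hk.1 (show k < p by omega)

lemma mul_harmonicSum_reflect (hA : (p : A) ^ 2 = 0) (hm : p = 2 * m + 1) {k : ℕ} (hk : k < p) :
    p * harmonicSum A 1 (p - (k + 1)) = p * harmonicSum A 1 k := by
  induction k with
  | zero => simpa using mul_harmonicSum_pred hA hm
  | succ k ih =>
    have hprev := ih (by omega)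
    have hinv := mul_inverse_natCast_sub hA k.succ_pos hk
    rw [show p - (k + 1) = p - (k + 1 + 1) + 1 by omega] at hprev hinv
    rw [harmonicSum_succ] at hprev ⊢
    linear_combination hprev - hinv

lemma four_mul_harmonicSum_two_mul (hA : (p : A) ^ 2 = 0) (hm : p = 2 * m + 1) {k : ℕ}
    (hk : k ≤ m) :
    4 * harmonicSum A 1 (2 * k)
      = 2 * harmonicSum A 1 k - 2 * (harmonicSum A 1 m - harmonicSum A 1 (m - k))
        - p * (harmonicSum A 2 m - harmonicSum A 2 (m - k)) := by
  induction k with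
  | zero => simp
  | succ k ih =>
    have hprev := ih (by omega)
    have heven := two_mul_inverse_two_mul
      (isUnit_natCast_of_lt hA (k := 2 * (k + 1)) (by omega) (by omega))
    have hodd := four_mul_inverse_sub_two_mul hA (k := m - (k + 1) + 1) (by omega) (by omega)
    rw [show p - 2 * (m - (k + 1) + 1) = 2 * k + 1 by omega] at hodd
    rw [show m - k = m - (k + 1) + 1 by omega, harmonicSum_succ, harmonicSum_succ] at hprev
    rw [show 2 * (k + 1) = 2 * k + 1 + 1 by ring] at heven ⊢
    simp only [harmonicSum_succ]
    linear_combination hprev + 2 * heven + hodd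

lemma harmonicSum_two_pred (hA : (p : A) ^ 2 = 0) (hm : p = 2 * m + 1) :
    harmonicSum A 2 (p - 1) = 2 * harmonicSum A 2 m + 2 * (p * harmonicSum A 3 m) := by
  rw [harmonicSum, sum_Icc_eq_sum_add_reflect _ hm]
  simp only [harmonicSum, mul_sum]
  rw [← sum_add_distrib]
  refine sum_congr rfl fun k hk => ?_
  rw [mem_Icc] at hk
  rw [inverse_natCast_sub hA hk.1 (by omega)]
  linear_combination (k : A)⁻¹ʳ ^ 4 * hA

lemma eight_mul_harmonicSum_two_pred (hA : (p : A) ^ 2 = 0) (hm : p = 2 * m + 1) :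
    8 * harmonicSum A 2 (p - 1) = 4 * harmonicSum A 2 m + 2 * (p * harmonicSum A 3 m) := by
  rw [harmonicSum, sum_Icc_eq_sum_even_add_reflect _ hm]
  simp only [harmonicSum, mul_sum]
  rw [← sum_add_distrib]
  refine sum_congr rfl fun k hk => ?_
  rw [mem_Icc] at hk
  have hunit := isUnit_natCast_of_lt hA (k := 2 * k) (by omega) (by omega)
  rw [inverse_natCast_sub hA (k := 2 * k) (by omega) (by omega), ← two_mul_inverse_two_mul hunit]
  linear_combination 8 * ((2 * k : ℕ) : A)⁻¹ʳ ^ 4 * hA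

lemma twelve_mul_harmonicSum_two (hA : (p : A) ^ 2 = 0) (hm : p = 2 * m + 1) :
    12 * harmonicSum A 2 m = -(14 * (p * harmonicSum A 3 m)) := by
  linear_combination eight_mul_harmonicSum_two_pred hA hm - 8 * harmonicSum_two_pred hA hm

lemma mul_harmonicSum_two (hA : (p : A) ^ 2 = 0) (hm : p = 2 * m + 1) (hp3 : 3 < p) :
    p * harmonicSum A 2 m = 0 := by
  refine (isUnit_twelve hA hp3).mul_left_cancel ?_
  linear_combination p * twelve_mul_harmonicSum_two hA hm - 14 * harmonicSum A 3 m * hA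

lemma mul_harmonicSum_sub_mul_inverse_sq (hA : (p : A) ^ 2 = 0) (hm : p = 2 * m + 1) {k : ℕ}
    (h0 : 0 < k) (hk : k < p) :
    p * (harmonicSum A 1 (p - k) * ((p - k : ℕ) : A)⁻¹ʳ ^ 2)
      = p * (harmonicSum A 1 k * (k : A)⁻¹ʳ ^ 2) - p * (k : A)⁻¹ʳ ^ 3 := by
  obtain ⟨k, rfl⟩ := Nat.exists_eq_add_of_le' h0
  have hharm := mul_harmonicSum_reflect hA hm (k := k) (by omega)
  have hinv := mul_inverse_natCast_sub hA h0 hk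
  rw [harmonicSum_succ]
  linear_combination ((p - (k + 1) : ℕ) : A)⁻¹ʳ ^ 2 * hharm
    + harmonicSum A 1 k * (((p - (k + 1) : ℕ) : A)⁻¹ʳ - ((k + 1 : ℕ) : A)⁻¹ʳ) * hinv

lemma mul_sum_harmonicSum_mul_sq_pred (hA : (p : A) ^ 2 = 0) (hm : p = 2 * m + 1) :
    p * ∑ k ∈ Icc 1 (p - 1), harmonicSum A 1 k * (k : A)⁻¹ʳ ^ 2
      = 2 * (p * ∑ k ∈ Icc 1 m, harmonicSum A 1 k * (k : A)⁻¹ʳ ^ 2) - p * harmonicSum A 3 m := by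
  rw [sum_Icc_eq_sum_add_reflect _ hm]
  simp only [harmonicSum_def 3, mul_sum]
  rw [← sum_sub_distrib]
  refine sum_congr rfl fun k hk => ?_
  rw [mem_Icc] at hk
  linear_combination mul_harmonicSum_sub_mul_inverse_sq hA hm hk.1 (show k < p by omega)

lemma eight_mul_sum_harmonicSum_mul_sq_pred (hA : (p : A) ^ 2 = 0) (hm : p = 2 * m + 1) :
    8 * (p * ∑ k ∈ Icc 1 (p - 1), harmonicSum A 1 k * (k : A)⁻¹ʳ ^ 2)
      = 4 * (p * ∑ k ∈ Icc 1 m, harmonicSum A 1 (2 * k) * (k : A)⁻¹ʳ ^ 2)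
        - p * harmonicSum A 3 m := by
  rw [sum_Icc_eq_sum_even_add_reflect _ hm]
  simp only [harmonicSum_def 3, mul_sum]
  rw [← sum_sub_distrib]
  refine sum_congr rfl fun k hk => ?_
  rw [mem_Icc] at hk
  rw [← two_mul_inverse_two_mul (isUnit_natCast_of_lt hA (k := 2 * k) (by omega) (by omega))]
  linear_combination 8 * mul_harmonicSum_sub_mul_inverse_sq hA hm (k := 2 * k) (by omega) (by omega)

lemma mul_sum_harmonicSum_two_mul_mul_sq (hA : (p : A) ^ 2 = 0) (hm : p = 2 * m + 1) :
    4 * (p * ∑ k ∈ Icc 1 m, harmonicSum A 1 (2 * k) * (k : A)⁻¹ʳ ^ 2)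
      = 4 * (p * ∑ k ∈ Icc 1 m, harmonicSum A 1 k * (k : A)⁻¹ʳ ^ 2)
        - 4 * (p * harmonicSum A 3 m) := by
  have hsplit : 4 * (p * ∑ k ∈ Icc 1 m, harmonicSum A 1 (2 * k) * (k : A)⁻¹ʳ ^ 2)
      = 2 * (p * ∑ k ∈ Icc 1 m, harmonicSum A 1 k * (k : A)⁻¹ʳ ^ 2)
        - 2 * p * harmonicSum A 1 m * harmonicSum A 2 m
        + 2 * (p * ∑ k ∈ Icc 1 m, harmonicSum A 1 (m - k) * (k : A)⁻¹ʳ ^ 2) := by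
    simp only [harmonicSum_def 2, mul_sum]
    rw [← sum_sub_distrib, ← sum_add_distrib]
    refine sum_congr rfl fun k hk => ?_
    rw [mem_Icc] at hk
    linear_combination p * (k : A)⁻¹ʳ ^ 2 * four_mul_harmonicSum_two_mul hA hm hk.2
      - (k : A)⁻¹ʳ ^ 2 * (harmonicSum A 2 m - harmonicSum A 2 (m - k)) * hA
  rw [hsplit, sum_harmonicSum_sub_mul_sq (isUnit_natCast_of_le hA (by omega))]
  ring

lemma four_mul_sum_harmonicSum_mul_sq (hA : (p : A) ^ 2 = 0) (hm : p = 2 * m + 1)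
    (hp3 : 3 < p) :
    4 * (p * ∑ k ∈ Icc 1 m, harmonicSum A 1 k * (k : A)⁻¹ʳ ^ 2) = p * harmonicSum A 3 m := by
  refine (isUnit_twelve hA hp3).mul_left_cancel ?_
  linear_combination 4 * eight_mul_sum_harmonicSum_mul_sq_pred hA hm
    - 32 * mul_sum_harmonicSum_mul_sq_pred hA hm
    + 4 * mul_sum_harmonicSum_two_mul_mul_sq hA hm

lemma four_mul_sum_harmonicSum_two_mul_mul (hA : (p : A) ^ 2 = 0) (hm : p = 2 * m + 1) :
    4 * ∑ k ∈ Icc 1 m, harmonicSum A 1 (2 * k) * (k : A)⁻¹ʳ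
      = harmonicSum A 1 m ^ 2 - harmonicSum A 2 m
        + p * (∑ k ∈ Icc 1 m, harmonicSum A 1 k * (k : A)⁻¹ʳ ^ 2 - 2 * harmonicSum A 3 m) := by
  have hunits := isUnit_natCast_of_le hA (n := m) (by omega)
  have hsplit : 4 * ∑ k ∈ Icc 1 m, harmonicSum A 1 (2 * k) * (k : A)⁻¹ʳ
      = 2 * ∑ k ∈ Icc 1 m, harmonicSum A 1 k * (k : A)⁻¹ʳ
        - (2 * harmonicSum A 1 m + p * harmonicSum A 2 m) * harmonicSum A 1 m
        + 2 * ∑ k ∈ Icc 1 m, harmonicSum A 1 (m - k) * (k : A)⁻¹ʳ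
        + p * ∑ k ∈ Icc 1 m, harmonicSum A 2 (m - k) * (k : A)⁻¹ʳ := by
    nth_rw 2 [harmonicSum_one m]
    simp only [mul_sum]
    rw [← sum_sub_distrib, ← sum_add_distrib, ← sum_add_distrib]
    refine sum_congr rfl fun k hk => ?_
    rw [mem_Icc] at hk
    linear_combination (k : A)⁻¹ʳ * four_mul_harmonicSum_two_mul hA hm hk.2
  have hstuffle := harmonicSum_mul_harmonicSum (A := A) 1 1 m
  have hconv := sum_harmonicSum_sub_mul_comm (A := A) 2 1 m
  simp only [pow_one, sum_add_distrib, Nat.reduceAdd] at hstuffle hconv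
  rw [hsplit, hconv, sum_harmonicSum_sub_mul hunits, sum_harmonicSum_sub_mul_sq hunits]
  linear_combination -hstuffle

lemma natCast_choose_pred (hA : (p : A) ^ 2 = 0) {k : ℕ} (hk : k < p) :
    ((p - 1).choose k : A) = (-1) ^ k * (1 - p * harmonicSum A 1 k) := by
  induction k with
  | zero => simp
  | succ k ih =>
    have hunit := isUnit_natCast_of_lt hA k.succ_pos hk
    have hinv := Ring.mul_inverse_cancel _ hunit
    have hchoose := congrArg (Nat.cast (R := A)) (Nat.choose_succ_right_eq (p - 1) k)
    rw [Nat.cast_mul, Nat.cast_mul, Nat.sub_sub, add_comm 1 k, Nat.cast_sub hk.le,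
      ih (by omega)] at hchoose
    refine hunit.mul_left_cancel ?_
    rw [harmonicSum_succ]
    linear_combination hchoose - (-1) ^ k * p * hinv - (-1) ^ k * harmonicSum A 1 k * hA

lemma natCast_choose_succ_div (hA : (p : A) ^ 2 = 0) {k : ℕ} (hk : k + 1 < p) :
    ((p.choose (k + 1) / p : ℕ) : A)
      = (-1) ^ k * (1 - p * harmonicSum A 1 k) * ((k + 1 : ℕ) : A)⁻¹ʳ := by
  have hp : p.Prime := Fact.out
  have hnat : p.choose (k + 1) / p * (k + 1) = (p - 1).choose k := by
    refine Nat.eq_of_mul_eq_mul_left hp.pos ?_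
    have hpascal := Nat.add_one_mul_choose_eq (p - 1) k
    rw [Nat.sub_add_cancel hp.one_le] at hpascal
    rw [hpascal, ← mul_assoc, Nat.mul_div_cancel' (hp.dvd_choose_self k.succ_ne_zero hk)]
  rw [← natCast_choose_pred hA (by omega), ← hnat, Nat.cast_mul,
    Ring.mul_inverse_cancel_right _ _ (isUnit_natCast_of_lt hA k.succ_pos hk)]

lemma sum_choose_two_mul_div (hm : p = 2 * m + 1) {q : ℕ} (hq : 2 ^ (p - 1) = 1 + p * q) :
    ∑ k ∈ Icc 1 m, p.choose (2 * k) / p = q := by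
  have hp : p.Prime := Fact.out
  have heven : ∑ k ∈ Icc 1 (p - 1), p.choose k = 2 * ∑ k ∈ Icc 1 m, p.choose (2 * k) := by
    rw [sum_Icc_eq_sum_even_add_reflect _ hm, mul_sum]
    refine sum_congr rfl fun k hk => ?_
    rw [mem_Icc] at hk
    rw [Nat.choose_symm (by omega), ← two_mul]
  have htotal : 2 ^ p = 1 + ∑ k ∈ Icc 1 (p - 1), p.choose k + 1 := by
    rw [← Nat.sum_range_choose, sum_range_succ, sum_range_eq_add_Ico _ hp.pos,
      Nat.choose_zero_right, Nat.choose_self,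
      Icc_sub_one_right_eq_Ico_of_not_isMin (by simpa using hp.ne_zero)]
  have hdiv : p * ∑ k ∈ Icc 1 m, p.choose (2 * k) / p = ∑ k ∈ Icc 1 m, p.choose (2 * k) := by
    rw [mul_sum]
    refine sum_congr rfl fun k hk => ?_
    rw [mem_Icc] at hk
    exact Nat.mul_div_cancel' (hp.dvd_choose_self (by omega) (by omega))
  refine Nat.eq_of_mul_eq_mul_left hp.pos ?_
  rw [← Nat.sub_add_cancel hp.one_le, pow_succ, hq, Nat.sub_add_cancel hp.one_le] at htotal
  omega

lemma four_mul_fermatQuotient (hA : (p : A) ^ 2 = 0) (hm : p = 2 * m + 1) {q : ℕ}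
    (hq : 2 ^ (p - 1) = 1 + p * q) :
    4 * (q : A) = -(2 * harmonicSum A 1 m)
      + 2 * (p * ∑ k ∈ Icc 1 m, harmonicSum A 1 (2 * k) * (k : A)⁻¹ʳ)
      - p * harmonicSum A 2 m := by
  rw [← sum_choose_two_mul_div hm hq]
  simp only [harmonicSum_one m, harmonicSum_def 2, mul_sum, Nat.cast_sum]
  rw [← sum_neg_distrib, ← sum_add_distrib, ← sum_sub_distrib]
  refine sum_congr rfl fun k hk => ?_
  rw [mem_Icc] at hk
  have hchoose := natCast_choose_succ_div hA (k := 2 * k - 1) (by omega)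
  have hharm := harmonicSum_succ (A := A) 1 (2 * k - 1)
  rw [Odd.neg_one_pow ⟨k - 1, by omega⟩] at hchoose
  rw [Nat.sub_add_cancel (by omega)] at hchoose hharm
  rw [hchoose, hharm,
    ← two_mul_inverse_two_mul (isUnit_natCast_of_lt hA (k := 2 * k) (by omega) (by omega))]
  ring

lemma mul_natCast_eq_of_modEq {n a b : ℕ} (hn : (n : A) ^ 2 = 0) (hab : a ≡ b [MOD n]) :
    (n : A) * a = n * b := by
  obtain ⟨c, hc⟩ := Nat.modEq_iff_dvd.1 hab
  have hcast := congrArg (Int.cast (R := A)) hc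
  push_cast at hcast
  linear_combination -n * hcast - c * hn

lemma mul_pow_eq_mul_inverse_pow (hA : (p : A) ^ 2 = 0) {i j k : ℕ} (hij : i + j = p - 1)
    (h0 : 0 < k) (hk : k < p) : (p : A) * k ^ i = p * (k : A)⁻¹ʳ ^ j := by
  have hunit := isUnit_natCast_of_lt hA h0 hk
  have hfermat := mul_natCast_eq_of_modEq hA <| Nat.ModEq.pow_card_sub_one_eq_one Fact.out
    (Nat.coprime_of_lt_prime h0.ne' hk Fact.out).symm
  rw [← hij, Nat.cast_one, Nat.cast_pow, pow_add, mul_one] at hfermat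
  refine (hunit.pow j).mul_right_cancel ?_
  rw [mul_assoc, hfermat, mul_assoc, ← mul_pow, Ring.inverse_mul_cancel _ hunit, one_pow, mul_one]

lemma natCast_sub_pow (hA : (p : A) ^ 2 = 0) (hm : p = 2 * m + 1) (hp3 : 3 < p) {k : ℕ}
    (h0 : 0 < k) (hk : k < p) :
    ((p - k : ℕ) : A) ^ (p - 3) = k ^ (p - 3) + 3 * (p * (k : A)⁻¹ʳ ^ 3) := by
  obtain ⟨c, hc⟩ := Polynomial.powAddExpansion (-(k : A)) p (p - 3)
  have hfermat := mul_pow_eq_mul_inverse_pow hA (i := p - 3 - 1) (j := 3) (by omega) h0 hk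
  rw [Even.neg_pow ⟨m - 1, by omega⟩, Odd.neg_pow ⟨m - 2, by omega⟩,
    Nat.cast_sub hp3.le, neg_add_eq_sub, ← Nat.cast_sub hk.le] at hc
  rw [hc]
  push_cast
  linear_combination (c - k ^ (p - 3 - 1)) * hA + 3 * hfermat

lemma sum_pow_pred (hA : (p : A) ^ 2 = 0) (hm : p = 2 * m + 1) (hp3 : 3 < p) :
    ∑ k ∈ Icc 1 (p - 1), (k : A) ^ (p - 3)
      = 2 * ∑ k ∈ Icc 1 m, (k : A) ^ (p - 3) + 3 * (p * harmonicSum A 3 m) := by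
  rw [sum_Icc_eq_sum_add_reflect _ hm]
  simp only [harmonicSum, mul_sum]
  rw [← sum_add_distrib]
  refine sum_congr rfl fun k hk => ?_
  rw [mem_Icc] at hk
  rw [natCast_sub_pow hA hm hp3 hk.1 (by omega)]
  ring

lemma eight_mul_sum_pow_pred (hA : (p : A) ^ 2 = 0) (hm : p = 2 * m + 1) (hp3 : 3 < p) :
    8 * ∑ k ∈ Icc 1 (p - 1), (k : A) ^ (p - 3)
      = 4 * 2 ^ (p - 1) * ∑ k ∈ Icc 1 m, (k : A) ^ (p - 3) + 3 * (p * harmonicSum A 3 m) := by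
  rw [sum_Icc_eq_sum_even_add_reflect _ hm, show p - 1 = p - 3 + 2 by omega]
  simp only [harmonicSum, mul_sum]
  rw [← sum_add_distrib]
  refine sum_congr rfl fun k hk => ?_
  rw [mem_Icc] at hk
  rw [natCast_sub_pow hA hm hp3 (by omega) (by omega),
    ← two_mul_inverse_two_mul (isUnit_natCast_of_lt hA (k := 2 * k) (by omega) (by omega))]
  push_cast
  ring

lemma two_mul_sum_pow_pred (hA : (p : A) ^ 2 = 0) (hm : p = 2 * m + 1) (hp3 : 3 < p) {q : ℕ}
    (hq : 2 ^ (p - 1) = 1 + p * q) :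
    2 * ∑ k ∈ Icc 1 (p - 1), (k : A) ^ (p - 3) = -(p * harmonicSum A 3 m) := by
  have htwelve := isUnit_twelve hA hp3
  have hpow : (2 : A) ^ (p - 1) = 1 + p * q := by exact_mod_cast congrArg (Nat.cast (R := A)) hq
  have hfold := sum_pow_pred hA hm hp3
  have hhalf : 12 * ∑ k ∈ Icc 1 m, (k : A) ^ (p - 3)
      = 4 * q * (p * ∑ k ∈ Icc 1 m, (k : A) ^ (p - 3)) - 21 * (p * harmonicSum A 3 m) := by
    have heven := eight_mul_sum_pow_pred hA hm hp3
    rw [hpow] at heven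
    linear_combination heven - 8 * hfold
  have hzero : p * ∑ k ∈ Icc 1 m, (k : A) ^ (p - 3) = 0 := by
    refine htwelve.mul_left_cancel ?_
    linear_combination p * hhalf
      + (4 * q * ∑ k ∈ Icc 1 m, (k : A) ^ (p - 3) - 21 * harmonicSum A 3 m) * hA
  refine htwelve.mul_left_cancel ?_
  linear_combination 24 * hfold + 4 * hhalf + 16 * q * hzero

lemma harmonicSum_eq_fermatQuotient (hA : (p : A) ^ 2 = 0) (hm : p = 2 * m + 1) (hp3 : 3 < p)
    {q : ℕ} (hq : 2 ^ (p - 1) = 1 + p * q) :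
    harmonicSum A 1 m = p * q ^ 2 - 2 * q := by
  have htwelve := isUnit_twelve hA hp3
  have hsum := four_mul_sum_harmonicSum_two_mul_mul hA hm
  have hzero := mul_harmonicSum_two hA hm hp3
  have hquot := four_mul_fermatQuotient hA hm hq
  set S := ∑ k ∈ Icc 1 m, harmonicSum A 1 (2 * k) * (k : A)⁻¹ʳ
  set V := ∑ k ∈ Icc 1 m, harmonicSum A 1 k * (k : A)⁻¹ʳ ^ 2
  have hharm : p * harmonicSum A 1 m = -(2 * (p * q)) := by
    refine htwelve.mul_left_cancel ?_
    linear_combination 6 * p * hquot + 6 * (2 * S - harmonicSum A 2 m) * hA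
  have hS : p * S = p * q ^ 2 := by
    refine htwelve.mul_left_cancel ?_
    linear_combination 3 * p * hsum + 3 * (harmonicSum A 1 m - 2 * q) * hharm - 3 * hzero
      + 3 * (V - 2 * harmonicSum A 3 m) * hA
  refine htwelve.mul_left_cancel ?_
  linear_combination 6 * hquot + 12 * hS - 6 * hzero

theorem sum_harmonicSum_two_mul_mul (hA : (p : A) ^ 2 = 0) (hm : p = 2 * m + 1) (hp3 : 3 < p)
    {q : ℕ} (hq : 2 ^ (p - 1) = 1 + p * q) :
    24 * ∑ k ∈ Icc 1 m, harmonicSum A 1 (2 * k) * (k : A)⁻¹ʳ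
      = 24 * ((q : A) ^ 2 - p * q ^ 3) + 7 * ∑ k ∈ Icc 1 (p - 1), (k : A) ^ (p - 3) := by
  have hsum := four_mul_sum_harmonicSum_two_mul_mul hA hm
  rw [harmonicSum_eq_fermatQuotient hA hm hp3 hq] at hsum
  refine (isUnit_twelve hA hp3).mul_left_cancel ?_
  linear_combination 72 * hsum + 18 * four_mul_sum_harmonicSum_mul_sq hA hm hp3
    - 6 * twelve_mul_harmonicSum_two hA hm - 42 * two_mul_sum_pow_pred hA hm hp3 hq
    + 72 * q ^ 4 * hA

end SqEqZero

section PIntegers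

variable {p : ℕ} [Fact p.Prime]

variable (p) in
/-- The ring `ℤ_(p)` of `p`-integral rationals: those with denominator prime to `p`. -/
abbrev pIntegers : Subring ℚ := (Rat.padicValuation p).integer

lemma mem_pIntegers_iff {x : ℚ} : x ∈ pIntegers p ↔ ¬ p ∣ x.den :=
  Rat.padicValuation_le_one_iff

lemma ratCongr_iff {r : ℕ} {a b : ℚ} :
    ratCongr p r a b ↔ ∃ c ∈ pIntegers p, a - b = c * (p : ℚ) ^ r := by
  simp only [ratCongr, mem_pIntegers_iff, and_comm]

lemma ratCongr_of_mk_eq {r : ℕ} {x y : pIntegers p}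
    (h : Ideal.Quotient.mk (Ideal.span {(p : pIntegers p) ^ r}) x = Ideal.Quotient.mk _ y) :
    ratCongr p r x y := by
  obtain ⟨c, hc⟩ := Ideal.mem_span_singleton'.1 (Ideal.Quotient.eq.1 h)
  exact ratCongr_iff.2 ⟨c, c.2, by simpa using (congrArg Subtype.val hc).symm⟩

lemma inv_natCast_mem_pIntegers {k : ℕ} (hk : ¬ p ∣ k) : (k : ℚ)⁻¹ ∈ pIntegers p := by
  have h0 : 0 < k := Nat.pos_of_ne_zero fun h => hk (h ▸ dvd_zero p)
  rwa [mem_pIntegers_iff, Rat.inv_natCast_den_of_pos h0]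

lemma isUnit_natCast_pIntegers {k : ℕ} (hk : ¬ p ∣ k) : IsUnit (k : pIntegers p) := by
  have h0 : (k : ℚ) ≠ 0 := Nat.cast_ne_zero.2 fun h => hk (h ▸ dvd_zero p)
  exact .of_mul_eq_one ⟨_, inv_natCast_mem_pIntegers hk⟩ (Subtype.ext (mul_inv_cancel₀ h0))

lemma bernoulli'_mem_pIntegers {n : ℕ} (hn : n + 1 < p) : bernoulli' n ∈ pIntegers p := by
  induction n using Nat.strong_induction_on with
  | _ n ih =>
    rw [bernoulli'_def]
    refine sub_mem (one_mem _) (sum_mem fun k hk => ?_)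
    rw [mem_range] at hk
    rw [div_eq_mul_inv, ← Nat.cast_sub hk.le, ← Nat.cast_add_one]
    exact mul_mem (mul_mem (natCast_mem _ _) (inv_natCast_mem_pIntegers
      (Nat.not_dvd_of_pos_of_lt (by omega) (by omega)))) (ih k hk (by omega))

lemma bernoulli_mem_pIntegers {n : ℕ} (hn : n + 1 < p) : bernoulli n ∈ pIntegers p :=
  mul_mem (pow_mem (neg_mem (one_mem _)) _) (bernoulli'_mem_pIntegers hn)

lemma ratCongr_sum_Icc_pow {n : ℕ} (h0 : n ≠ 0) (hn : n + 1 < p) :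
    ratCongr p 2 (∑ k ∈ Icc 1 (p - 1), (k : ℚ) ^ n) (p * bernoulli n) := by
  have hrange : ∑ k ∈ Icc 1 (p - 1), (k : ℚ) ^ n = ∑ k ∈ range p, (k : ℚ) ^ n := by
    rw [sum_range_eq_add_Ico _ (by omega), Nat.cast_zero, zero_pow h0, zero_add,
      Icc_sub_one_right_eq_Ico_of_not_isMin (by simp; omega)]
  rw [ratCongr_iff, hrange]
  refine ⟨∑ i ∈ range n, bernoulli i * ((n + 1).choose i) * ((n + 1 : ℕ) : ℚ)⁻¹
    * (p : ℚ) ^ (n - 1 - i), sum_mem fun i hi => ?_, ?_⟩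
  · rw [mem_range] at hi
    exact mul_mem (mul_mem (mul_mem (bernoulli_mem_pIntegers (by omega)) (natCast_mem _ _))
      (inv_natCast_mem_pIntegers (Nat.not_dvd_of_pos_of_lt n.succ_pos hn)))
      (pow_mem (natCast_mem _ _) _)
  · have htop : bernoulli n * ((n + 1).choose n) * (p : ℚ) ^ (n + 1 - n) / (n + 1)
        = p * bernoulli n := by
      rw [Nat.choose_succ_self_right, Nat.add_sub_cancel_left]
      push_cast
      field_simp
    rw [sum_range_pow, sum_range_succ, htop, add_sub_cancel_right, sum_mul]
    refine sum_congr rfl fun i hi => ?_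
    rw [mem_range] at hi
    rw [show n + 1 - i = n - 1 - i + 2 by omega]
    push_cast
    ring

lemma ratCongr_sum_harmonic_two_mul_div {m q : ℕ} (hm : p = 2 * m + 1) (hp3 : 3 < p)
    (hq : 2 ^ (p - 1) = 1 + p * q) :
    ratCongr p 2 (24 * ∑ k ∈ Icc 1 m, harmonic (2 * k) / k)
      (24 * ((q : ℚ) ^ 2 - p * q ^ 3) + 7 * ∑ k ∈ Icc 1 (p - 1), (k : ℚ) ^ (p - 3)) := by
  let π := Ideal.Quotient.mk (Ideal.span {(p : pIntegers p) ^ 2})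
  have hzero : (p : pIntegers p ⧸ Ideal.span {(p : pIntegers p) ^ 2}) ^ 2 = 0 := by
    rw [← map_natCast π, ← map_pow]
    exact Ideal.Quotient.mk_singleton_self _
  have hunits : ∀ k, 0 < k → k ≤ 2 * m → IsUnit (k : pIntegers p) := fun k h0 hk =>
    isUnit_natCast_pIntegers (Nat.not_dvd_of_pos_of_lt h0 (by omega))
  have hquot := sum_harmonicSum_two_mul_mul hzero hm hp3 hq
  rw [← map_sum_harmonicSum_two_mul_mul π hunits] at hquot
  have hmk : π (24 * ∑ k ∈ Icc 1 m, harmonicSum (pIntegers p) 1 (2 * k) * (k : pIntegers p)⁻¹ʳ)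
      = π (24 * ((q : pIntegers p) ^ 2 - (p : pIntegers p) * (q : pIntegers p) ^ 3)
        + 7 * ∑ k ∈ Icc 1 (p - 1), (k : pIntegers p) ^ (p - 3)) := by
    rw [map_mul, map_ofNat, hquot]
    simp only [map_add, map_sub, map_mul, map_pow, map_sum, map_ofNat, map_natCast]
  have hcongr := ratCongr_of_mk_eq hmk
  simp only [← Subring.subtype_apply, map_add, map_sub, map_mul, map_pow, map_ofNat,
    map_natCast, map_sum_harmonicSum_two_mul_mul _ hunits, harmonicSum_rat_one,
    Ring.inverse_eq_inv] at hcongr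
  simpa only [map_sum, map_pow, map_natCast, div_eq_mul_inv] using hcongr

end PIntegers

lemma exists_two_pow_pred_eq {p : ℕ} (hp : p.Prime) (hodd : Odd p) :
    ∃ q, 2 ^ (p - 1) = 1 + p * q := by
  obtain ⟨q, hq⟩ := (Nat.modEq_iff_dvd' Nat.one_le_two_pow).1
    (Nat.ModEq.pow_card_sub_one_eq_one hp (Nat.coprime_two_left.2 hodd)).symm
  exact ⟨q, by rw [← hq, Nat.add_sub_cancel' Nat.one_le_two_pow]⟩

lemma fermatQ_eq {p q : ℕ} (hp : p ≠ 0) (hq : 2 ^ (p - 1) = 1 + p * q) : fermatQ p = q := by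
  rw [fermatQ, div_eq_iff (Nat.cast_ne_zero.2 hp), sub_eq_iff_eq_add']
  exact_mod_cast hq.trans (by ring)

theorem sum_H2k_div_k (p : ℕ) (hp : p.Prime) (hp3 : 3 < p) :
    ratCongr p 2
      (∑ k ∈ Finset.Icc 1 ((p - 1) / 2), harmonic (2 * k) / k)
      (fermatQ p ^ 2 - p * fermatQ p ^ 3 + (7 / 24) * p * bernoulli (p - 3)) := by
  have : Fact p.Prime := ⟨hp⟩
  have hodd : Odd p := hp.odd_of_ne_two (by omega)
  have ⟨m, hm⟩ := hodd
  obtain ⟨q, hq⟩ := exists_two_pow_pred_eq hp hodd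
  obtain ⟨c, hc, hsum⟩ := ratCongr_iff.1 (ratCongr_sum_harmonic_two_mul_div hm hp3 hq)
  obtain ⟨d, hd, hpow⟩ := ratCongr_iff.1
    (ratCongr_sum_Icc_pow (p := p) (n := p - 3) (by omega) (by omega))
  have hinv : ((24 : ℕ) : ℚ)⁻¹ ∈ pIntegers p := inv_natCast_mem_pIntegers <|
    (Nat.Prime.coprime_iff_not_dvd hp).1 (coprime_two_pow_mul_three hp hp3 3)
  rw [fermatQ_eq hp.ne_zero hq, show (p - 1) / 2 = m by omega, ratCongr_iff]
  refine ⟨(c + 7 * d) * ((24 : ℕ) : ℚ)⁻¹,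
    mul_mem (add_mem hc (mul_mem (natCast_mem _ 7) hd)) hinv, ?_⟩
  push_cast
  linear_combination hsum / 24 + 7 / 24 * hpow
end
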